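/- Let u and v be smooth plurisubharmonic functions on an open domain U ⊂ ℂ^n such that P_{ω_E}(√-1 ∂∂̄ u) < c and P_{ω_E}(√-1 ∂∂̄ v) < c for some c > 0, where ω_E is the standard Euclidean Kähler form. Then the current T = √-1 ∂∂̄ max(u,v) satisfies n·c·T^{n-1} > (n-1)·T^{n-2} ∧ ω_E in the sense of currents (after local regularization: for any V ⊂⊂ U there is ε > 0 such that for all sufficiently small r, the smooth regularizations T^{(r)} satisfy n(c-ε)(T^{(r)})^{n-1} > (n-1)(T^{(r)})^{n-2} ∧ ω_E on V). -/

import Mathlib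

open Matrix ComplexOrder MeasureTheory Metric

noncomputable instance EuclideanSpace.complexMeasurableSpace (n : ℕ) :
    MeasurableSpace (EuclideanSpace ℂ (Fin n)) := borel _

instance EuclideanSpace.complexBorelSpace (n : ℕ) :
    BorelSpace (EuclideanSpace ℂ (Fin n)) := ⟨rfl⟩

/-- Lebesgue measure on `ℂ^n`. -/
noncomputable def leb (n : ℕ) : Measure (EuclideanSpace ℂ (Fin n)) := Measure.addHaar

/-- Plurisubharmonicity: upper semicontinuity together with the sub-mean value
inequality on every complex disc contained in `U`. -/
def PSHOn {n : ℕ} (f : EuclideanSpace ℂ (Fin n) → ℝ)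
    (U : Set (EuclideanSpace ℂ (Fin n))) : Prop :=
  UpperSemicontinuousOn f U ∧
    ∀ p ∈ U, ∀ v : EuclideanSpace ℂ (Fin n),
      (∀ w : ℂ, ‖w‖ ≤ 1 → p + w • v ∈ U) →
      f p ≤ (2 * Real.pi)⁻¹ * ∫ θ in (0:ℝ)..(2 * Real.pi),
        f (p + Complex.exp (θ * Complex.I) • v)

/-- The complex Hessian matrix `(∂²f/∂z_j ∂z̄_k)` of a real-valued function on `ℂ^n`,
representing the `(1,1)`-form `√-1 ∂∂̄ f`. -/
noncomputable def cHess {n : ℕ} (f : EuclideanSpace ℂ (Fin n) → ℝ)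
    (z : EuclideanSpace ℂ (Fin n)) : Matrix (Fin n) (Fin n) ℂ :=
  Matrix.of fun j k =>
    (((fderiv ℝ (fun w => fderiv ℝ f w (EuclideanSpace.single k 1)) z)
          (EuclideanSpace.single j 1) +
        (fderiv ℝ (fun w => fderiv ℝ f w (Complex.I • EuclideanSpace.single k 1)) z)
          (Complex.I • EuclideanSpace.single j 1) : ℝ) / 4 : ℂ) +
      Complex.I *
        (((fderiv ℝ (fun w => fderiv ℝ f w (Complex.I • EuclideanSpace.single k 1)) z)
            (EuclideanSpace.single j 1) -
          (fderiv ℝ (fun w => fderiv ℝ f w (EuclideanSpace.single k 1)) z)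
            (Complex.I • EuclideanSpace.single j 1) : ℝ) / 4)

/-- `tr_{A|_V}(B|_V)` for the subspace `V` spanned by the columns of `P`. -/
noncomputable def restTrace {N k : ℕ} (A B : Matrix (Fin N) (Fin N) ℂ)
    (P : Matrix (Fin N) (Fin k) ℂ) : ℝ :=
  ((Pᴴ * A * P)⁻¹ * (Pᴴ * B * P)).trace.re

/-- `jP A B = P_B(A)`: supremum over hyperplanes `V` of `tr_{A|_V}(B|_V)`;
`jP A 1 < c` expresses the positivity `n c A^{n-1} - (n-1) A^{n-2} ∧ ω_E > 0`. -/
noncomputable def jP {N : ℕ} (A B : Matrix (Fin N) (Fin N) ℂ) : ℝ :=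
  sSup {x : ℝ | ∃ P : Matrix (Fin N) (Fin (N - 1)) ℂ,
    Function.Injective P.mulVecLin ∧ x = restTrace A B P}

/-- Local regularization at scale `r` of `f` by convolution with the radial mollifier `ρ`. -/
noncomputable def reg {n : ℕ} (f : EuclideanSpace ℂ (Fin n) → ℝ) (ρ : ℝ → ℝ) (r : ℝ)
    (z : EuclideanSpace ℂ (Fin n)) : ℝ :=
  ∫ y in ball (0 : EuclideanSpace ℂ (Fin n)) r,
    ((r ^ (2 * n))⁻¹ * ρ (‖y‖ / r)) * f (z - y) ∂(leb n)

/-! The idea is to test Hessians through second differences. At every point the second differences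
of `max u v` dominate those of whichever of `u`, `v` is active there, so a lower bound on a sum
`∑ i, D²(a i, a i)` shared by `u` and `v` holds for the second differences of `max u v`. Being
linear in the function, it passes to convolutions with nonnegative kernels of mass one, and letting
the step tend to zero it becomes a bound on the Hessian of the regularization.

The condition `jP A 1 ≤ s` is of this linear kind: completing the square gives
`tr_{A|V}(1|V) = max (2 Re tr Y - tr (Y* A Y))` over the matrices `Y` with columns
in `V`, so the condition says that `tr (Y* A Y) ≥ 2 Re tr Y - s` for all such `Y` and all
hyperplanes `V`. The loss `ε` comes from upper semicontinuity of `A ↦ jP A 1`, which turns the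
strict bound by `c` into a uniform gap on compact sets.
-/

open Filter Topology Convolution

/-- The symmetric second difference of `f` at `w` in the direction `a`. -/
def secondDiff {E : Type*} [AddCommGroup E] (f : E → ℝ) (a w : E) : ℝ :=
  f (w + a) + f (w - a) - 2 * f w

section SecondDifferences

theorem mul_sq_le_secondDiff {φ φ' φ'' : ℝ → ℝ} {m h : ℝ} (hh : 0 ≤ h)
    (hφ : ∀ t ∈ Set.Icc (-h) h, HasDerivAt φ (φ' t) t)
    (hφ' : ∀ t ∈ Set.Icc (-h) h, HasDerivAt φ' (φ'' t) t)
    (hm : ∀ t ∈ Set.Icc (-h) h, m ≤ φ'' t) : m * h ^ 2 ≤ secondDiff φ h 0 := by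
  have hψ : ∀ t ∈ Set.Icc (-h) h,
      HasDerivAt (fun t => φ t - m / 2 * t ^ 2) (φ' t - m * t) t := fun t ht =>
    ((hφ t ht).sub ((hasDerivAt_pow 2 t).const_mul (m / 2))).congr_deriv (by
      push_cast; ring)
  have hψ' : ∀ t ∈ Set.Icc (-h) h, HasDerivAt (fun t => φ' t - m * t) (φ'' t - m) t :=
    fun t ht => ((hφ' t ht).sub ((hasDerivAt_id t).const_mul m)).congr_deriv (by ring)
  have hconv : ConvexOn ℝ (Set.Icc (-h) h) (fun t => φ t - m / 2 * t ^ 2) :=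
    convexOn_of_hasDerivWithinAt2_nonneg (convex_Icc _ _)
      (fun t ht => (hψ t ht).continuousAt.continuousWithinAt)
      (fun t ht => (hψ t (interior_subset ht)).hasDerivWithinAt)
      (fun t ht => (hψ' t (interior_subset ht)).hasDerivWithinAt)
      (fun t ht => sub_nonneg.2 (hm t (interior_subset ht)))
  have hmid := hconv.2 (Set.left_mem_Icc.2 (neg_le_self hh)) (Set.right_mem_Icc.2 (neg_le_self hh))
    (by norm_num : (0 : ℝ) ≤ 1 / 2) (by norm_num : (0 : ℝ) ≤ 1 / 2) (by norm_num)
  simp only [smul_eq_mul, mul_neg, neg_add_cancel] at hmid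
  simp only [secondDiff, zero_add, zero_sub]
  linarith

theorem tendsto_secondDiff_div_sq {φ φ' : ℝ → ℝ} {c : ℝ}
    (hφ : ∀ᶠ t in 𝓝 0, HasDerivAt φ (φ' t) t) (hφ' : HasDerivAt φ' c 0) :
    Tendsto (fun h => secondDiff φ h 0 / h ^ 2) (𝓝[>] 0) (𝓝 c) := by
  have hneg : Tendsto (fun t : ℝ => -t) (𝓝 0) (𝓝 0) := by simpa using tendsto_neg (0 : ℝ)
  have hnum : ∀ᶠ t in 𝓝 0, HasDerivAt (fun h => secondDiff φ h 0) (φ' t - φ' (-t)) t := by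
    filter_upwards [hφ, hneg.eventually hφ] with t ht hnt
    have hsum := (ht.add (hnt.comp t (hasDerivAt_neg t))).sub_const (2 * φ 0)
    exact (hsum.congr_of_eventuallyEq (.of_forall fun h => by simp [secondDiff])).congr_deriv
      (by ring)
  have hslope : HasDerivAt (fun t => φ' t - φ' (-t)) (2 * c) 0 := by
    have hφ'neg : HasDerivAt φ' c (-0) := by simpa using hφ'
    exact (hφ'.sub (hφ'neg.comp 0 (hasDerivAt_neg 0))).congr_deriv (by ring)
  have hcont : ContinuousAt (fun h => secondDiff φ h 0) 0 :=
    hnum.self_of_nhds.continuousAt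
  refine HasDerivAt.lhopital_zero_nhdsGT (hnum.filter_mono nhdsWithin_le_nhds)
    (g' := fun t => 2 * t) (.of_forall fun t => by simpa using hasDerivAt_pow 2 t)
    ?_ ?_ ?_ ?_
  · filter_upwards [self_mem_nhdsWithin] with t ht using mul_ne_zero two_ne_zero (ne_of_gt ht)
  · refine tendsto_nhdsWithin_of_tendsto_nhds ?_
    simpa [secondDiff, two_mul] using hcont.tendsto
  · refine tendsto_nhdsWithin_of_tendsto_nhds ?_
    simpa using (continuous_pow 2).tendsto (0 : ℝ)
  · have hlim := (hasDerivAt_iff_tendsto_slope.1 hslope).mono_left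
      (nhdsWithin_mono 0 fun t (ht : 0 < t) => ht.ne')
    refine ((hlim.const_mul 2⁻¹).congr fun t => ?_).trans (by simp)
    simp only [slope_def_field, neg_zero, sub_self, sub_zero]
    ring

variable {E : Type*}

theorem secondDiff_le_of_le_of_eq [AddCommGroup E] {f g : E → ℝ} {w : E} (hfg : ∀ x, f x ≤ g x)
    (hw : f w = g w) (a : E) : secondDiff f a w ≤ secondDiff g a w := by
  have hadd := hfg (w + a)
  have hsub := hfg (w - a)
  unfold secondDiff
  linarith

variable [NormedAddCommGroup E] [NormedSpace ℝ E]

theorem secondDiff_smul (f : E → ℝ) (a w : E) (h : ℝ) :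
    secondDiff f (h • a) w = secondDiff (fun t : ℝ => f (w + t • a)) h 0 := by
  simp [secondDiff, sub_eq_add_neg]

theorem hasDerivAt_comp_add_smul {F : Type*} [NormedAddCommGroup F] [NormedSpace ℝ F] {f : E → F}
    {w a : E} {t : ℝ} (hf : DifferentiableAt ℝ f (w + t • a)) :
    HasDerivAt (fun t : ℝ => f (w + t • a)) (fderiv ℝ f (w + t • a) a) t := by
  have hline : HasDerivAt (fun t : ℝ => w + t • a) a t := by
    simpa using ((hasDerivAt_id t).smul_const a).const_add w
  exact hf.hasFDerivAt.comp_hasDerivAt t hline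

theorem hasDerivAt_fderiv_comp_add_smul {f : E → ℝ} {w a : E} {t : ℝ}
    (hf : DifferentiableAt ℝ (fderiv ℝ f) (w + t • a)) :
    HasDerivAt (fun t : ℝ => fderiv ℝ f (w + t • a) a)
      (fderiv ℝ (fderiv ℝ f) (w + t • a) a a) t := by
  simpa using (hasDerivAt_comp_add_smul hf).clm_apply (hasDerivAt_const t a)

theorem tendsto_secondDiff_smul_div_sq {f : E → ℝ} {z : E}
    (hf : ∀ᶠ x in 𝓝 z, DifferentiableAt ℝ f x) (hf' : DifferentiableAt ℝ (fderiv ℝ f) z) (a : E) :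
    Tendsto (fun h : ℝ => secondDiff f (h • a) z / h ^ 2) (𝓝[>] 0)
      (𝓝 (fderiv ℝ (fderiv ℝ f) z a a)) := by
  have hline : Tendsto (fun t : ℝ => z + t • a) (𝓝 0) (𝓝 z) :=
    Continuous.tendsto' (by fun_prop) _ _ (by simp)
  simp only [secondDiff_smul]
  refine tendsto_secondDiff_div_sq
    ((hline.eventually hf).mono fun t ht => hasDerivAt_comp_add_smul ht) ?_
  simpa using hasDerivAt_fderiv_comp_add_smul (w := z) (a := a) (t := 0) (by simpa using hf')

theorem eventually_forall_le_secondDiff {f : E → ℝ} (hf : Differentiable ℝ f)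
    (hf' : Differentiable ℝ (fderiv ℝ f)) (hf'' : UniformContinuous (fderiv ℝ (fderiv ℝ f)))
    (a : E) {τ : ℝ} (hτ : 0 < τ) :
    ∀ᶠ h in 𝓝[>] (0 : ℝ), ∀ w,
      (fderiv ℝ (fderiv ℝ f) w a a - τ) * h ^ 2 ≤ secondDiff f (h • a) w := by
  obtain ⟨δ, hδ, hosc⟩ := Metric.uniformContinuous_iff.1
    ((ContinuousLinearMap.apply ℝ ℝ a).uniformContinuous.comp
      ((ContinuousLinearMap.apply ℝ (E →L[ℝ] ℝ) a).uniformContinuous.comp hf'')) τ hτ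
  have hsmall : ∀ᶠ h in 𝓝[>] (0 : ℝ), h * ‖a‖ < δ :=
    (Continuous.tendsto' (by fun_prop : Continuous fun h : ℝ => h * ‖a‖) 0 0 (by simp)
      |>.eventually_lt_const hδ).filter_mono nhdsWithin_le_nhds
  filter_upwards [hsmall, self_mem_nhdsWithin] with h hh hpos w
  rw [secondDiff_smul]
  refine mul_sq_le_secondDiff (le_of_lt hpos) (fun t _ => hasDerivAt_comp_add_smul (hf _))
    (fun t _ => hasDerivAt_fderiv_comp_add_smul (hf' _)) fun t ht => ?_
  have hdist : dist (w + t • a) w < δ := by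
    rw [dist_eq_norm, add_sub_cancel_left, norm_smul]
    exact (mul_le_mul_of_nonneg_right (abs_le.2 ht) (norm_nonneg a)).trans_lt hh
  have := (abs_lt.1 (hosc hdist)).1
  simp only [Function.comp_apply, ContinuousLinearMap.apply_apply] at this
  linarith

end SecondDifferences

/-- The weak form of the inequality `κ ≤ ∑ i, D²f(a i, a i)` on `S`, in terms of second differences
at small scales. It makes sense for nonsmooth `f` and passes to maxima and convolutions. -/
def SecondDiffLowerBound {ι E : Type*} [Fintype ι] [AddCommGroup E] [Module ℝ E]
    (a : ι → E) (κ : ℝ) (S : Set E) (f : E → ℝ) : Prop :=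
  ∀ κ' < κ, ∀ᶠ h in 𝓝[>] (0 : ℝ), ∀ w ∈ S, κ' * h ^ 2 ≤ ∑ i, secondDiff f (h • a i) w

namespace SecondDiffLowerBound

section Max

variable {ι E : Type*} [Fintype ι] [AddCommGroup E] [Module ℝ E] {a : ι → E} {κ : ℝ} {S : Set E}

theorem max {u v : E → ℝ} (hu : SecondDiffLowerBound a κ S u)
    (hv : SecondDiffLowerBound a κ S v) :
    SecondDiffLowerBound a κ S (fun w => max (u w) (v w)) := by
  intro κ' hκ'
  filter_upwards [hu κ' hκ', hv κ' hκ'] with h hhu hhv w hw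
  rcases le_total (v w) (u w) with hvu | huv
  · exact (hhu w hw).trans <| Finset.sum_le_sum fun i _ =>
      secondDiff_le_of_le_of_eq (fun x => le_max_left _ _) (max_eq_left hvu).symm _
  · exact (hhv w hw).trans <| Finset.sum_le_sum fun i _ =>
      secondDiff_le_of_le_of_eq (fun x => le_max_right _ _) (max_eq_right huv).symm _

end Max

section Smooth

variable {ι E : Type*} [Fintype ι] [NormedAddCommGroup E] [NormedSpace ℝ E] {a : ι → E} {κ : ℝ}
  {S : Set E} {f : E → ℝ}

theorem of_le_sum_fderiv_fderiv (hf : Differentiable ℝ f)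
    (hf' : Differentiable ℝ (fderiv ℝ f)) (hf'' : UniformContinuous (fderiv ℝ (fderiv ℝ f)))
    (hκ : ∀ w ∈ S, κ ≤ ∑ i, fderiv ℝ (fderiv ℝ f) w (a i) (a i)) :
    SecondDiffLowerBound a κ S f := by
  intro κ' hκ'
  set τ : ℝ := (κ - κ') / (Fintype.card ι + 1)
  have hτ : 0 < τ := div_pos (sub_pos.2 hκ') (by positivity)
  have hsumτ : Fintype.card ι * τ ≤ κ - κ' := by
    calc Fintype.card ι * τ ≤ (Fintype.card ι + 1) * τ := by gcongr; simp
      _ = κ - κ' := mul_div_cancel₀ _ (by positivity)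
  filter_upwards [eventually_all.2 fun i => eventually_forall_le_secondDiff hf hf' hf'' (a i) hτ]
    with h hh w hw
  calc κ' * h ^ 2
      ≤ (∑ i, fderiv ℝ (fderiv ℝ f) w (a i) (a i) - Fintype.card ι * τ) * h ^ 2 := by
        gcongr
        linarith [hκ w hw]
    _ = ∑ i, (fderiv ℝ (fderiv ℝ f) w (a i) (a i) - τ) * h ^ 2 := by
        simp [← Finset.sum_mul, Finset.sum_sub_distrib]
    _ ≤ ∑ i, secondDiff f (h • a i) w := Finset.sum_le_sum fun i _ => hh i w

theorem of_contDiff (hf : ContDiff ℝ 2 f) (hfc : HasCompactSupport f)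
    (hκ : ∀ w ∈ S, κ ≤ ∑ i, fderiv ℝ (fderiv ℝ f) w (a i) (a i)) :
    SecondDiffLowerBound a κ S f := by
  have hf' : ContDiff ℝ 1 (fderiv ℝ f) := hf.fderiv_right (by norm_num)
  have hf'' : Continuous (fderiv ℝ (fderiv ℝ f)) := hf'.continuous_fderiv one_ne_zero
  exact of_le_sum_fderiv_fderiv (hf.differentiable two_ne_zero) (hf'.differentiable one_ne_zero)
    (((hfc.fderiv ℝ).fderiv ℝ).uniformContinuous_of_continuous hf'') hκ

theorem le_sum_fderiv_fderiv {z : E} (hf : SecondDiffLowerBound a κ S f) (hz : z ∈ S)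
    (hdiff : ∀ᶠ x in 𝓝 z, DifferentiableAt ℝ f x) (hdiff' : DifferentiableAt ℝ (fderiv ℝ f) z) :
    κ ≤ ∑ i, fderiv ℝ (fderiv ℝ f) z (a i) (a i) := by
  have hlim : Tendsto (fun h : ℝ => ∑ i, secondDiff f (h • a i) z / h ^ 2) (𝓝[>] 0)
      (𝓝 (∑ i, fderiv ℝ (fderiv ℝ f) z (a i) (a i))) :=
    tendsto_finsetSum _ fun i _ => tendsto_secondDiff_smul_div_sq hdiff hdiff' (a i)
  refine le_of_forall_lt fun κ' hκ' => ?_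
  obtain ⟨κ'', h', h''⟩ := exists_between hκ'
  refine h'.trans_le (ge_of_tendsto hlim ?_)
  filter_upwards [hf κ'' h'', self_mem_nhdsWithin] with h hh hpos
  rw [← Finset.sum_div, le_div_iff₀ (pow_pos hpos 2)]
  exact hh z hz

end Smooth

end SecondDiffLowerBound

section Convolution

theorem mul_secondDiff_sub {E : Type*} [AddCommGroup E] (k f : E → ℝ) (a y z : E) :
    k y * secondDiff f a (z - y) =
      k y * f (z + a - y) + k y * f (z - a - y) - 2 * (k y * f (z - y)) := by
  rw [secondDiff, add_sub_right_comm z, sub_right_comm z a]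
  ring

variable {E : Type*} [AddCommGroup E] [MeasurableSpace E] {μ : Measure E} {k f : E → ℝ}

theorem convolutionExists_secondDiff (hkf : ConvolutionExists k f (.lsmul ℝ ℝ) μ) (a : E) :
    ConvolutionExists k (secondDiff f a) (.lsmul ℝ ℝ) μ := fun z =>
  (((hkf (z + a)).add (hkf (z - a))).sub ((hkf z).const_mul 2)).congr
    (.of_forall fun y => (mul_secondDiff_sub k f a y z).symm)

theorem secondDiff_convolution (hkf : ConvolutionExists k f (.lsmul ℝ ℝ) μ) (a : E) :
    secondDiff (k ⋆[.lsmul ℝ ℝ, μ] f) a = k ⋆[.lsmul ℝ ℝ, μ] secondDiff f a := by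
  have hint (z : E) : Integrable (fun y => k y * f (z - y)) μ := hkf z
  funext z
  simp only [convolution_def, ContinuousLinearMap.lsmul_apply, smul_eq_mul, mul_secondDiff_sub]
  rw [integral_sub (by exact (hint _).add (hint _)) ((hint z).const_mul 2),
    integral_add (hint _) (hint _), integral_const_mul]
  rfl

theorem SecondDiffLowerBound.convolution [Module ℝ E] {ι : Type*} [Fintype ι] {a : ι → E} {κ : ℝ}
    {S T : Set E} (hf : SecondDiffLowerBound a κ S f)
    (hkf : ConvolutionExists k f (.lsmul ℝ ℝ) μ) (hk : ∀ y, 0 ≤ k y) (hk1 : ∫ y, k y ∂μ = 1)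
    (hTS : ∀ z ∈ T, ∀ y ∈ Function.support k, z - y ∈ S) :
    SecondDiffLowerBound a κ T (k ⋆[.lsmul ℝ ℝ, μ] f) := by
  intro κ' hκ'
  filter_upwards [hf κ' hκ'] with h hh z hz
  have hint (i : ι) : Integrable (fun y => k y * secondDiff f (h • a i) (z - y)) μ :=
    convolutionExists_secondDiff hkf (h • a i) z
  calc κ' * h ^ 2 = ∫ y, k y * (κ' * h ^ 2) ∂μ := by rw [integral_mul_const, hk1, one_mul]
    _ ≤ ∫ y, ∑ i, k y * secondDiff f (h • a i) (z - y) ∂μ := by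
        refine integral_mono ((integrable_of_integral_eq_one hk1).mul_const _)
          (integrable_finsetSum _ fun i _ => hint i) fun y => ?_
        rw [← Finset.mul_sum]
        by_cases hy : k y = 0
        · simp [hy]
        · exact mul_le_mul_of_nonneg_left (hh _ (hTS z hz y hy)) (hk y)
    _ = ∑ i, secondDiff (k ⋆[.lsmul ℝ ℝ, μ] f) (h • a i) z := by
        simp only [integral_finsetSum _ fun i _ => hint i, secondDiff_convolution hkf,
          convolution_def, ContinuousLinearMap.lsmul_apply, smul_eq_mul]

end Convolution

section LipschitzConvolution

variable {G E E' F : Type*} [NormedAddCommGroup G] [NormedSpace ℝ G] [FiniteDimensional ℝ G]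
  [MeasurableSpace G] [BorelSpace G] {μ : Measure G} [μ.IsAddHaarMeasure]
  [NormedAddCommGroup E] [NormedSpace ℝ E] [NormedAddCommGroup E'] [NormedSpace ℝ E']
  [NormedAddCommGroup F] [NormedSpace ℝ F] {C : NNReal}

theorem aestronglyMeasurable_fderiv_of_finiteDimensional [FiniteDimensional ℝ E] (f : G → E)
    (ν : Measure G) : AEStronglyMeasurable (fderiv ℝ f) ν := by
  have : ProperSpace (G →L[ℝ] E) := FiniteDimensional.proper_real _
  have : CompleteSpace E := FiniteDimensional.complete ℝ E
  borelize (G →L[ℝ] E)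
  exact (measurable_fderiv ℝ f).aestronglyMeasurable

theorem hasFDerivAt_convolution_right_of_lipschitz [FiniteDimensional ℝ E'] {f : G → E}
    {g : G → E'} {x₀ : G} (L : E →L[ℝ] E' →L[ℝ] F) (hf : Integrable f μ)
    (hg : LipschitzWith C g) (hfg : ConvolutionExistsAt f g x₀ L μ) :
    HasFDerivAt (f ⋆[L, μ] g) ((f ⋆[L.precompR G, μ] fderiv ℝ g) x₀) x₀ := by
  have hmeas (x : G) : AEStronglyMeasurable (fun t => L (f t) (g (x - t))) μ :=
    hf.aestronglyMeasurable.convolution_integrand_snd L hg.continuous.aestronglyMeasurable x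
  have hmeas' : AEStronglyMeasurable (fun t => L.precompR G (f t) (fderiv ℝ g (x₀ - t))) μ :=
    hf.aestronglyMeasurable.convolution_integrand_snd (L.precompR G)
      (aestronglyMeasurable_fderiv_of_finiteDimensional g μ) x₀
  have hlip (t : G) : LipschitzOnWith (Real.nnabs (‖L‖ * ‖f t‖ * C))
      (fun x => L (f t) (g (x - t))) Set.univ := by
    refine LipschitzOnWith.of_dist_le_mul fun x _ y _ => ?_
    calc dist (L (f t) (g (x - t))) (L (f t) (g (y - t)))
        = ‖L (f t) (g (x - t) - g (y - t))‖ := by rw [dist_eq_norm, map_sub]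
      _ ≤ ‖L‖ * ‖f t‖ * (C * dist x y) := by
        refine (L.le_opNorm₂ _ _).trans (mul_le_mul_of_nonneg_left ?_ (by positivity))
        simpa [dist_eq_norm] using hg.dist_le_mul (x - t) (y - t)
      _ = Real.nnabs (‖L‖ * ‖f t‖ * C) * dist x y := by
        rw [Real.coe_nnabs, abs_of_nonneg (by positivity)]
        ring
  have hderiv : ∀ᵐ t ∂μ, HasFDerivAt (fun x => L (f t) (g (x - t)))
      (L.precompR G (f t) (fderiv ℝ g (x₀ - t))) x₀ := by
    filter_upwards [(Measure.measurePreserving_sub_left μ x₀).quasiMeasurePreserving.ae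
      hg.ae_differentiableAt] with t ht
    exact (L (f t)).hasFDerivAt.comp x₀ ((hasFDerivAt_comp_sub t).2 ht.hasFDerivAt)
  exact (hasFDerivAt_integral_of_dominated_loc_of_lip univ_mem (.of_forall hmeas) hfg hmeas'
    (.of_forall hlip) ((hf.norm.const_mul _).mul_const _) hderiv).2

theorem hasFDerivAt_convolution_left_of_lipschitz [FiniteDimensional ℝ E] {f : G → E}
    {g : G → E'} {x₀ : G} (L : E →L[ℝ] E' →L[ℝ] F) (hf : LipschitzWith C f)
    (hg : Integrable g μ) (hfg : ConvolutionExistsAt f g x₀ L μ) :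
    HasFDerivAt (f ⋆[L, μ] g) ((fderiv ℝ f ⋆[L.precompL G, μ] g) x₀) x₀ := by
  simp +singlePass only [← convolution_flip]
  exact hasFDerivAt_convolution_right_of_lipschitz L.flip hg hf (convolutionExistsAt_flip.2 hfg)

theorem integrable_fderiv_of_lipschitz [FiniteDimensional ℝ E] {f : G → E}
    (hf : LipschitzWith C f) (hfc : HasCompactSupport f) : Integrable (fderiv ℝ f) μ := by
  have hK : IsCompact (tsupport (fderiv ℝ f)) := hfc.fderiv ℝ
  have hbound : Integrable ((tsupport (fderiv ℝ f)).indicator fun _ => (C : ℝ)) μ :=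
    (integrableOn_const hK.measure_lt_top.ne).integrable_indicator hK.measurableSet
  refine hbound.mono' (aestronglyMeasurable_fderiv_of_finiteDimensional f μ)
    (.of_forall fun x => ?_)
  by_cases hx : x ∈ tsupport (fderiv ℝ f)
  · simpa [hx] using norm_fderiv_le_of_lipschitz ℝ hf
  · simp [hx, image_eq_zero_of_notMem_tsupport hx]

variable {k f : G → ℝ} {D : NNReal}

theorem differentiable_convolution_of_lipschitz (hk : Continuous k) (hkc : HasCompactSupport k)
    (hf : LipschitzWith C f) : Differentiable ℝ (k ⋆[.lsmul ℝ ℝ, μ] f) := fun x =>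
  (hasFDerivAt_convolution_right_of_lipschitz _ (hk.integrable_of_hasCompactSupport hkc) hf
    (hkc.convolutionExists_left _ hk hf.continuous.locallyIntegrable x)).differentiableAt

theorem differentiable_fderiv_convolution_of_lipschitz (hk : LipschitzWith D k)
    (hkc : HasCompactSupport k) (hf : LipschitzWith C f) (hfc : HasCompactSupport f) :
    Differentiable ℝ (fderiv ℝ (k ⋆[.lsmul ℝ ℝ, μ] f)) := by
  have hfderiv : fderiv ℝ (k ⋆[.lsmul ℝ ℝ, μ] f) =
      k ⋆[(ContinuousLinearMap.lsmul ℝ ℝ).precompR G, μ] fderiv ℝ f := funext fun x =>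
    (hasFDerivAt_convolution_right_of_lipschitz _
      (hk.continuous.integrable_of_hasCompactSupport hkc) hf
      (hkc.convolutionExists_left _ hk.continuous hf.continuous.locallyIntegrable x)).fderiv
  have hint : Integrable (fderiv ℝ f) μ := integrable_fderiv_of_lipschitz hf hfc
  rw [hfderiv]
  exact fun x => (hasFDerivAt_convolution_left_of_lipschitz _ hk hint
    (hkc.convolutionExists_left _ hk.continuous hint.locallyIntegrable x)).differentiableAt

end LipschitzConvolution

section MaxConvolution

variable {E : Type*} [NormedAddCommGroup E] [NormedSpace ℝ E] [MeasurableSpace E]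

/-- A Lipschitz mollifier for `μ`: a nonnegative compactly supported Lipschitz function of total
mass one. Lipschitz regularity is enough for convolutions with Lipschitz functions to be twice
differentiable. -/
structure IsLipschitzMollifier (k : E → ℝ) (μ : Measure E) : Prop where
  lipschitz : ∃ C, LipschitzWith C k
  hasCompactSupport : HasCompactSupport k
  nonneg : ∀ y, 0 ≤ k y
  integral_eq_one : ∫ y, k y ∂μ = 1

variable [FiniteDimensional ℝ E] [BorelSpace E] {μ : Measure E} [μ.IsAddHaarMeasure]
  {u v k : E → ℝ}

theorem IsLipschitzMollifier.differentiable_convolution_max (hk : IsLipschitzMollifier k μ)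
    (hu : ContDiff ℝ 2 u) (huc : HasCompactSupport u) (hv : ContDiff ℝ 2 v)
    (hvc : HasCompactSupport v) :
    Differentiable ℝ (k ⋆[.lsmul ℝ ℝ, μ] fun w => max (u w) (v w)) ∧
      Differentiable ℝ (fderiv ℝ (k ⋆[.lsmul ℝ ℝ, μ] fun w => max (u w) (v w))) := by
  obtain ⟨C, hC⟩ := hk.lipschitz
  obtain ⟨Cu, hCu⟩ := hu.lipschitzWith_of_hasCompactSupport huc two_ne_zero
  obtain ⟨Cv, hCv⟩ := hv.lipschitzWith_of_hasCompactSupport hvc two_ne_zero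
  exact ⟨differentiable_convolution_of_lipschitz hC.continuous hk.hasCompactSupport (hCu.max hCv),
    differentiable_fderiv_convolution_of_lipschitz hC hk.hasCompactSupport (hCu.max hCv)
      (huc.comp₂_left hvc (max_self 0))⟩

theorem IsLipschitzMollifier.le_sum_fderiv_fderiv_convolution_max (hk : IsLipschitzMollifier k μ)
    (hu : ContDiff ℝ 2 u) (huc : HasCompactSupport u) (hv : ContDiff ℝ 2 v)
    (hvc : HasCompactSupport v) {ι : Type*} [Fintype ι] {a : ι → E} {κ : ℝ} {z : E}
    (hκu : ∀ y ∈ Function.support k, κ ≤ ∑ i, fderiv ℝ (fderiv ℝ u) (z - y) (a i) (a i))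
    (hκv : ∀ y ∈ Function.support k, κ ≤ ∑ i, fderiv ℝ (fderiv ℝ v) (z - y) (a i) (a i)) :
    κ ≤ ∑ i, fderiv ℝ
      (fderiv ℝ (k ⋆[.lsmul ℝ ℝ, μ] fun w => max (u w) (v w))) z (a i) (a i) := by
  obtain ⟨hfdiff, hfdiff'⟩ := hk.differentiable_convolution_max (μ := μ) hu huc hv hvc
  have hbound : SecondDiffLowerBound a κ ((z - ·) '' Function.support k)
      (fun w => max (u w) (v w)) :=
    (SecondDiffLowerBound.of_contDiff hu huc (Set.forall_mem_image.2 hκu)).max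
      (.of_contDiff hv hvc (Set.forall_mem_image.2 hκv))
  obtain ⟨C, hC⟩ := hk.lipschitz
  refine (hbound.convolution (T := {z}) (hk.hasCompactSupport.convolutionExists_left _ hC.continuous
    (hu.continuous.max hv.continuous).locallyIntegrable) hk.nonneg hk.integral_eq_one
    ?_).le_sum_fderiv_fderiv rfl (.of_forall hfdiff) (hfdiff' z)
  rintro _ rfl y hy
  exact Set.mem_image_of_mem _ hy

end MaxConvolution

section HermitianForms

variable {m : Type*} [Fintype m] {A B : Matrix m m ℂ}

/-- The real-valued Hermitian form `x ↦ Re (x* A x)` of a complex matrix. -/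
def hermForm (A : Matrix m m ℂ) (x : m → ℂ) : ℝ :=
  (star x ⬝ᵥ A *ᵥ x).re

theorem hermForm_smul (A : Matrix m m ℂ) (t : ℝ) (x : m → ℂ) :
    hermForm A ((t : ℂ) • x) = t ^ 2 * hermForm A x := by
  simp only [hermForm, star_smul, mulVec_smul, smul_dotProduct, dotProduct_smul, smul_eq_mul,
    Complex.star_def, Complex.conj_ofReal, Complex.re_ofReal_mul]
  ring

theorem continuous_hermForm : Continuous fun p : Matrix m m ℂ × (m → ℂ) => hermForm p.1 p.2 := by
  unfold hermForm
  fun_prop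

theorem hermForm_pos (hA : A.PosDef) {x : m → ℂ} (hx : x ≠ 0) : 0 < hermForm A x :=
  hA.re_dotProduct_pos hx

theorem posDef_of_hermForm_pos (hA : A.IsHermitian) (h : ∀ x, x ≠ 0 → 0 < hermForm A x) :
    A.PosDef :=
  .of_dotProduct_mulVec_pos hA fun x hx =>
    Complex.lt_def.2 ⟨h x hx, (hA.im_star_dotProduct_mulVec_self x).symm⟩

theorem trace_conjTranspose_mul_mul_re {k : Type*} [Fintype k] (A : Matrix m m ℂ)
    (Y : Matrix m k ℂ) : (Yᴴ * A * Y).trace.re = ∑ i, hermForm A (Y.col i) := by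
  simp only [trace, diag_apply, Complex.re_sum, Matrix.mul_assoc]
  rfl

theorem eventually_forall_mul_hermForm_le (hA : A.PosDef) {θ : ℝ} (hθ : θ < 1) :
    ∀ᶠ B in 𝓝 A, ∀ x, θ * hermForm A x ≤ hermForm B x := by
  have hsphere : ∀ᶠ B in 𝓝 A, ∀ x ∈ sphere (0 : m → ℂ) 1, θ * hermForm A x < hermForm B x := by
    refine (isCompact_sphere _ _).eventually_forall_of_forall_eventually fun x hx => ?_
    have hpos : 0 < hermForm A x := hermForm_pos hA (ne_zero_of_mem_unit_sphere ⟨x, hx⟩)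
    exact ((continuous_hermForm.comp (Continuous.prodMk_right A)).comp continuous_snd
      |>.const_mul θ).continuousAt.eventually_lt continuous_hermForm.continuousAt
      (mul_lt_of_lt_one_left hpos hθ)
  filter_upwards [hsphere] with B hB x
  rcases eq_or_ne x 0 with rfl | hx
  · simp [hermForm]
  obtain ⟨y, hy, hyx⟩ : ∃ y ∈ sphere (0 : m → ℂ) 1, ((‖x‖ : ℝ) : ℂ) • y = x :=
    ⟨((‖x‖⁻¹ : ℝ) : ℂ) • x, by simp [norm_smul, hx], by simp [smul_smul, hx]⟩
  rw [← hyx, hermForm_smul, hermForm_smul, mul_left_comm]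
  gcongr
  exact (hB y hy).le

/-- The concave functional `Y ↦ 2 Re tr Y - tr (Y* A Y)`. Maximizing it over the matrices `Y` whose
columns lie in a subspace `V` gives `tr_{A|V}(1|V)`, which turns bounds on `jP A 1` into bounds on
`A` that are linear in `A`. -/
def dualTrace (A Y : Matrix m m ℂ) : ℝ :=
  2 * Y.trace.re - ∑ i, hermForm A (Y.col i)

theorem dualTrace_smul_le {θ : ℝ} (hθ : 0 ≤ θ)
    (h : ∀ x, θ * hermForm A x ≤ hermForm B x) (Y : Matrix m m ℂ) :
    θ * dualTrace B Y ≤ dualTrace A ((θ : ℂ) • Y) := by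
  have hcol (i : m) : hermForm A (((θ : ℂ) • Y).col i) = θ * (θ * hermForm A (Y.col i)) := by
    rw [← mul_assoc, ← sq]
    exact hermForm_smul A θ (Y.col i)
  simp only [dualTrace, hcol, trace_smul, smul_eq_mul, Complex.re_ofReal_mul, ← Finset.mul_sum]
  have hsum : θ * ∑ i, hermForm A (Y.col i) ≤ ∑ i, hermForm B (Y.col i) := by
    rw [Finset.mul_sum]
    exact Finset.sum_le_sum fun i _ => h (Y.col i)
  linarith [mul_le_mul_of_nonneg_left hsum hθ]

end HermitianForms

section RestrictedTrace

variable {N k : ℕ} {A B : Matrix (Fin N) (Fin N) ℂ}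

theorem restTrace_sub_dualTrace_mul (hA : A.PosDef) {P : Matrix (Fin N) (Fin k) ℂ}
    (hP : Function.Injective P.mulVecLin) (X : Matrix (Fin k) (Fin N) ℂ) :
    restTrace A 1 P - dualTrace A (P * X) =
      ((X - (Pᴴ * A * P)⁻¹ * Pᴴ)ᴴ * (Pᴴ * A * P) *
        (X - (Pᴴ * A * P)⁻¹ * Pᴴ)).trace.re := by
  have hH : (Pᴴ * A * P).PosDef := hA.conjTranspose_mul_mul_same hP
  have hY : (P * X)ᴴ * A * (P * X) = Xᴴ * (Pᴴ * A * P) * X := by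
    simp only [conjTranspose_mul, Matrix.mul_assoc]
  rw [dualTrace, ← trace_conjTranspose_mul_mul_re, hY, restTrace, Matrix.mul_one]
  generalize Pᴴ * A * P = H at hH ⊢
  have hdet : IsUnit H.det := (isUnit_iff_isUnit_det _).1 hH.isUnit
  have hsquare : (X - H⁻¹ * Pᴴ)ᴴ * H * (X - H⁻¹ * Pᴴ) =
      Xᴴ * H * X - (P * X)ᴴ - P * X + P * (H⁻¹ * Pᴴ) := by
    have hleft : Xᴴ * H * (H⁻¹ * Pᴴ) = (P * X)ᴴ := by
      rw [Matrix.mul_assoc, mul_nonsing_inv_cancel_left _ _ hdet, conjTranspose_mul]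
    rw [conjTranspose_sub, conjTranspose_mul, conjTranspose_conjTranspose,
      hH.isHermitian.inv.eq, Matrix.sub_mul, nonsing_inv_mul_cancel_right _ _ hdet, Matrix.sub_mul,
      Matrix.mul_sub, Matrix.mul_sub, hleft]
    abel
  have htrace : (P * (H⁻¹ * Pᴴ)).trace = (H⁻¹ * (Pᴴ * P)).trace := by
    rw [trace_mul_comm, Matrix.mul_assoc]
  rw [hsquare]
  simp only [trace_add, trace_sub, trace_conjTranspose, Complex.add_re, Complex.sub_re,
    Complex.star_def, Complex.conj_re, htrace]
  ring

theorem isGreatest_restTrace (hA : A.PosDef) {P : Matrix (Fin N) (Fin k) ℂ}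
    (hP : Function.Injective P.mulVecLin) :
    IsGreatest (Set.range fun X : Matrix (Fin k) (Fin N) ℂ => dualTrace A (P * X))
      (restTrace A 1 P) := by
  have hH : (Pᴴ * A * P).PosDef := hA.conjTranspose_mul_mul_same hP
  refine ⟨⟨(Pᴴ * A * P)⁻¹ * Pᴴ, ?_⟩, ?_⟩
  · rw [eq_comm, ← sub_eq_zero, restTrace_sub_dualTrace_mul hA hP]
    simp
  · rintro _ ⟨X, rfl⟩
    rw [← sub_nonneg, restTrace_sub_dualTrace_mul hA hP]
    exact (Complex.nonneg_iff.1
      (hH.posSemidef.conjTranspose_mul_mul_same (X - (Pᴴ * A * P)⁻¹ * Pᴴ)).trace_nonneg).1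

theorem exists_injective_mulVecLin (h : k ≤ N) :
    ∃ P : Matrix (Fin N) (Fin k) ℂ, Function.Injective P.mulVecLin := by
  refine ⟨(1 : Matrix (Fin N) (Fin N) ℂ).submatrix id (Fin.castLE h), mulVec_injective_iff.2 ?_⟩
  have hone : LinearIndependent ℂ (1 : Matrix (Fin N) (Fin N) ℂ).col :=
    mulVec_injective_iff.1 fun x y hxy => by simpa using hxy
  exact hone.comp (Fin.castLE h) (Fin.castLE_injective h)

theorem jP_one_le_iff (hA : A.PosDef) {s : ℝ} :
    jP A 1 ≤ s ↔ ∀ P : Matrix (Fin N) (Fin (N - 1)) ℂ, Function.Injective P.mulVecLin →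
      ∀ X : Matrix (Fin (N - 1)) (Fin N) ℂ, dualTrace A (P * X) ≤ s := by
  have hbdd : BddAbove {x | ∃ P : Matrix (Fin N) (Fin (N - 1)) ℂ,
      Function.Injective P.mulVecLin ∧ x = restTrace A 1 P} := by
    refine ⟨restTrace A 1 (1 : Matrix (Fin N) (Fin N) ℂ), ?_⟩
    rintro _ ⟨P, hP, rfl⟩
    obtain ⟨X, hX⟩ := (isGreatest_restTrace hA hP).1
    refine (isGreatest_restTrace hA (by simpa using Function.injective_id)).2 ⟨P * X, ?_⟩
    simpa using hX
  obtain ⟨P₀, hP₀⟩ := exists_injective_mulVecLin (Nat.sub_le N 1)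
  rw [jP, csSup_le_iff hbdd ⟨_, P₀, hP₀, rfl⟩]
  constructor
  · exact fun h P hP X => ((isGreatest_restTrace hA hP).2 ⟨X, rfl⟩).trans (h _ ⟨P, hP, rfl⟩)
  · rintro h _ ⟨P, hP, rfl⟩
    obtain ⟨X, hX⟩ := (isGreatest_restTrace hA hP).1
    exact hX ▸ h P hP X

theorem mul_jP_one_le (hA : A.PosDef) (hB : B.PosDef) {θ : ℝ} (hθ : 0 < θ)
    (h : ∀ x, θ * hermForm A x ≤ hermForm B x) : θ * jP B 1 ≤ jP A 1 := by
  rw [← le_div_iff₀' hθ, jP_one_le_iff hB]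
  intro P hP X
  rw [le_div_iff₀' hθ]
  refine (dualTrace_smul_le hθ.le h _).trans ?_
  rw [← Matrix.mul_smul]
  exact (jP_one_le_iff hA).1 le_rfl P hP _

theorem upperSemicontinuousOn_jP_one :
    UpperSemicontinuousOn (fun A : Matrix (Fin N) (Fin N) ℂ => jP A 1) {A | A.PosDef} := by
  intro A hA y hy
  have hθ : ∀ᶠ θ : ℝ in 𝓝[<] 1, jP A 1 < θ * y := by
    refine Filter.Eventually.filter_mono nhdsWithin_le_nhds ?_
    exact (Continuous.tendsto' (by fun_prop) 1 y (one_mul y)).eventually_const_lt hy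
  obtain ⟨θ, hθy, hθ0, hθ1⟩ := (hθ.and (Ioo_mem_nhdsLT zero_lt_one)).exists
  filter_upwards [(eventually_forall_mul_hermForm_le hA hθ1).filter_mono nhdsWithin_le_nhds,
    self_mem_nhdsWithin] with B hB hBpos
  exact lt_of_mul_lt_mul_left ((mul_jP_one_le hA hBpos hθ0 hB).trans_lt hθy) hθ0.le

end RestrictedTrace

section ComplexHessian

variable {n : ℕ} {f g : EuclideanSpace ℂ (Fin n) → ℝ} {z : EuclideanSpace ℂ (Fin n)}

/-- The vector `ξ = x̄` of `ℂ^n`. As `cHess` carries the index of `∂/∂z` on its rows, it is in the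
directions `ξ` and `iξ` that `x* (cHess f z) x` is a quarter of the Laplacian of `f`. -/
def leviVec (x : Fin n → ℂ) : EuclideanSpace ℂ (Fin n) :=
  WithLp.toLp 2 (star x)

theorem leviVec_eq_sum (x : Fin n → ℂ) :
    leviVec x = ∑ k, ((x k).re • EuclideanSpace.single k (1 : ℂ) -
      (x k).im • (Complex.I • EuclideanSpace.single k (1 : ℂ))) := by
  ext i
  rw [WithLp.ofLp_sum, Finset.sum_apply, Finset.sum_eq_single i]
  · apply Complex.ext <;> simp [leviVec]
  · intro k _ hk
    simp [hk.symm]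
  · simp

theorem I_smul_leviVec_eq_sum (x : Fin n → ℂ) :
    Complex.I • leviVec x = ∑ k, ((x k).re • (Complex.I • EuclideanSpace.single k (1 : ℂ)) +
      (x k).im • EuclideanSpace.single k (1 : ℂ)) := by
  rw [leviVec_eq_sum, Finset.smul_sum]
  refine Finset.sum_congr rfl fun k _ => ?_
  rw [smul_sub, smul_comm Complex.I, smul_comm Complex.I, smul_smul Complex.I, Complex.I_mul_I,
    neg_one_smul, smul_neg, sub_neg_eq_add]

theorem cHess_apply (hf : DifferentiableAt ℝ (fderiv ℝ f) z) (j k : Fin n) :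
    cHess f z j k =
      ⟨(fderiv ℝ (fderiv ℝ f) z (EuclideanSpace.single j 1) (EuclideanSpace.single k 1) +
        fderiv ℝ (fderiv ℝ f) z (Complex.I • EuclideanSpace.single j 1)
          (Complex.I • EuclideanSpace.single k 1)) / 4,
      (fderiv ℝ (fderiv ℝ f) z (EuclideanSpace.single j 1)
          (Complex.I • EuclideanSpace.single k 1) -
        fderiv ℝ (fderiv ℝ f) z (Complex.I • EuclideanSpace.single j 1)
          (EuclideanSpace.single k 1)) / 4⟩ := by
  have hfderiv (a b : EuclideanSpace ℂ (Fin n)) :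
      fderiv ℝ (fun w => fderiv ℝ f w b) z a = fderiv ℝ (fderiv ℝ f) z a b := by
    rw [fderiv_clm_apply hf (differentiableAt_const b)]
    simp
  simp only [cHess, Matrix.of_apply, hfderiv, Complex.mk_eq_add_mul_I]
  push_cast
  ring

theorem isHermitian_cHess (hf : ∀ᶠ w in 𝓝 z, DifferentiableAt ℝ f w)
    (hf' : DifferentiableAt ℝ (fderiv ℝ f) z) : (cHess f z).IsHermitian := by
  have hsymm := second_derivative_symmetric_of_eventually
    (hf.mono fun w hw => hw.hasFDerivAt) hf'.hasFDerivAt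
  ext j k
  rw [Matrix.conjTranspose_apply, cHess_apply hf', cHess_apply hf',
    hsymm (EuclideanSpace.single k 1), hsymm (Complex.I • EuclideanSpace.single k 1),
    hsymm (EuclideanSpace.single k 1) (Complex.I • EuclideanSpace.single j 1),
    hsymm (Complex.I • EuclideanSpace.single k 1) (EuclideanSpace.single j 1)]
  apply Complex.ext
  · simp
  · simp only [Complex.star_def, Complex.conj_im]
    ring

theorem four_mul_hermForm_cHess (hf : DifferentiableAt ℝ (fderiv ℝ f) z) (x : Fin n → ℂ) :
    4 * hermForm (cHess f z) x = fderiv ℝ (fderiv ℝ f) z (leviVec x) (leviVec x) +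
      fderiv ℝ (fderiv ℝ f) z (Complex.I • leviVec x) (Complex.I • leviVec x) := by
  rw [I_smul_leviVec_eq_sum, leviVec_eq_sum]
  unfold hermForm dotProduct Matrix.mulVec dotProduct
  simp only [cHess_apply hf]
  generalize fderiv ℝ (fderiv ℝ f) z = B
  simp only [map_sum, map_add, map_sub, map_smul, _root_.sum_apply, _root_.add_apply,
    _root_.sub_apply, _root_.smul_apply, Pi.star_apply, Complex.re_sum, Finset.mul_sum]
  rw [Finset.sum_comm, ← Finset.sum_add_distrib]
  refine Finset.sum_congr rfl fun k _ => ?_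
  simp only [smul_eq_mul, Finset.mul_sum, ← Finset.sum_sub_distrib, ← Finset.sum_add_distrib]
  refine Finset.sum_congr rfl fun j _ => ?_
  simp only [Complex.mul_re, Complex.mul_im, Complex.star_def, Complex.conj_re, Complex.conj_im]
  ring

theorem cHess_congr (h : f =ᶠ[𝓝 z] g) : cHess f z = cHess g z := by
  have hfderiv (b : EuclideanSpace ℂ (Fin n)) :
      fderiv ℝ (fun w => fderiv ℝ f w b) z = fderiv ℝ (fun w => fderiv ℝ g w b) z :=
    ((h.fderiv (𝕜 := ℝ)).fun_comp fun A => A b).fderiv_eq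
  simp only [cHess, hfderiv]

theorem continuous_cHess (hf : ContDiff ℝ 2 f) : Continuous (cHess f) := by
  have hf' : ContDiff ℝ 1 (fderiv ℝ f) := hf.fderiv_right (by norm_num)
  have : Continuous (fderiv ℝ (fderiv ℝ f)) := hf'.continuous_fderiv one_ne_zero
  refine continuous_matrix fun j k => ?_
  simp only [cHess_apply (hf'.differentiable one_ne_zero).differentiableAt,
    Complex.mk_eq_add_mul_I]
  fun_prop

theorem exists_lt_forall_jP_one_le {L : Set (EuclideanSpace ℂ (Fin n))} (hL : IsCompact L)
    (hf : ContinuousOn (cHess f) L) {c : ℝ}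
    (h : ∀ z ∈ L, (cHess f z).PosDef ∧ jP (cHess f z) 1 < c) :
    ∃ s < c, ∀ z ∈ L, jP (cHess f z) 1 ≤ s := by
  rcases L.eq_empty_or_nonempty with rfl | hne
  · exact ⟨c - 1, sub_one_lt c, by simp⟩
  have husc : UpperSemicontinuousOn (fun z => jP (cHess f z) 1) L :=
    upperSemicontinuousOn_jP_one.comp hf fun z hz => (h z hz).1
  obtain ⟨z₀, hz₀, hmax⟩ := husc.exists_isMaxOn hne hL
  exact ⟨jP (cHess f z₀) 1, (h z₀ hz₀).2, hmax⟩

end ComplexHessian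

namespace IsLipschitzMollifier

variable {n : ℕ} {μ : Measure (EuclideanSpace ℂ (Fin n))} [μ.IsAddHaarMeasure]
  {u v k : EuclideanSpace ℂ (Fin n) → ℝ} {z : EuclideanSpace ℂ (Fin n)}
  {L : Set (EuclideanSpace ℂ (Fin n))}

theorem le_sum_hermForm_cHess_convolution_max (hk : IsLipschitzMollifier k μ)
    (hu : ContDiff ℝ 2 u) (huc : HasCompactSupport u) (hv : ContDiff ℝ 2 v)
    (hvc : HasCompactSupport v) {ι : Type*} [Fintype ι] {x : ι → Fin n → ℂ} {κ : ℝ}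
    (hκu : ∀ y ∈ Function.support k, κ ≤ ∑ i, hermForm (cHess u (z - y)) (x i))
    (hκv : ∀ y ∈ Function.support k, κ ≤ ∑ i, hermForm (cHess v (z - y)) (x i)) :
    κ ≤ ∑ i, hermForm (cHess (k ⋆[.lsmul ℝ ℝ, μ] fun w => max (u w) (v w)) z) (x i) := by
  have hdiff := (hk.differentiable_convolution_max (μ := μ) hu huc hv hvc).2
  have hlaplace {f : EuclideanSpace ℂ (Fin n) → ℝ} (hf : Differentiable ℝ (fderiv ℝ f))
      (w : EuclideanSpace ℂ (Fin n)) :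
      ∑ i, fderiv ℝ (fderiv ℝ f) w
          (Sum.elim (fun i => leviVec (x i)) (fun i => Complex.I • leviVec (x i)) i)
          (Sum.elim (fun i => leviVec (x i)) (fun i => Complex.I • leviVec (x i)) i) =
        4 * ∑ i, hermForm (cHess f w) (x i) := by
    simp only [Fintype.sum_sum_type, Sum.elim_inl, Sum.elim_inr, ← Finset.sum_add_distrib,
      Finset.mul_sum, four_mul_hermForm_cHess (hf w)]
  have hdiff' {f : EuclideanSpace ℂ (Fin n) → ℝ} (hf : ContDiff ℝ 2 f) :
      Differentiable ℝ (fderiv ℝ f) :=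
    (hf.fderiv_right (m := 1) (by norm_num)).differentiable one_ne_zero
  have hle := hk.le_sum_fderiv_fderiv_convolution_max (μ := μ) hu huc hv hvc (κ := 4 * κ) (z := z)
    (fun y hy => by rw [hlaplace (hdiff' hu)]; linarith [hκu y hy])
    (fun y hy => by rw [hlaplace (hdiff' hv)]; linarith [hκv y hy])
  rw [hlaplace hdiff] at hle
  linarith

theorem posDef_cHess_convolution_max (hk : IsLipschitzMollifier k μ)
    (hu : ContDiff ℝ 2 u) (huc : HasCompactSupport u) (hv : ContDiff ℝ 2 v)
    (hvc : HasCompactSupport v) (hL : IsCompact L) (hkL : ∀ y ∈ Function.support k, z - y ∈ L)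
    (hLu : ∀ w ∈ L, (cHess u w).PosDef) (hLv : ∀ w ∈ L, (cHess v w).PosDef) :
    (cHess (k ⋆[.lsmul ℝ ℝ, μ] fun w => max (u w) (v w)) z).PosDef := by
  obtain ⟨hdiff, hdiff'⟩ := hk.differentiable_convolution_max (μ := μ) hu huc hv hvc
  refine posDef_of_hermForm_pos (isHermitian_cHess (.of_forall hdiff) (hdiff' z)) fun x hx => ?_
  have hlower {f : EuclideanSpace ℂ (Fin n) → ℝ} (hf : ContDiff ℝ 2 f)
      (hLf : ∀ w ∈ L, (cHess f w).PosDef) : ∃ δ > 0, ∀ w ∈ L, δ ≤ hermForm (cHess f w) x := by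
    have hcont : Continuous fun w => hermForm (cHess f w) x :=
      continuous_hermForm.comp ((continuous_cHess hf).prodMk continuous_const)
    exact hL.exists_forall_le' hcont.continuousOn fun w hw => hermForm_pos (hLf w hw) hx
  obtain ⟨δu, hδu, hu_le⟩ := hlower hu hLu
  obtain ⟨δv, hδv, hv_le⟩ := hlower hv hLv
  have hle := hk.le_sum_hermForm_cHess_convolution_max (μ := μ) hu huc hv hvc (ι := Unit)
    (x := fun _ => x) (κ := min δu δv) (z := z)
    (fun y hy => by simpa using .inl (hu_le _ (hkL y hy)))
    (fun y hy => by simpa using .inr (hv_le _ (hkL y hy)))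
  exact (lt_min hδu hδv).trans_le (by simpa using hle)

theorem jP_cHess_convolution_max_le (hk : IsLipschitzMollifier k μ)
    (hu : ContDiff ℝ 2 u) (huc : HasCompactSupport u) (hv : ContDiff ℝ 2 v)
    (hvc : HasCompactSupport v) (hL : IsCompact L) (hkL : ∀ y ∈ Function.support k, z - y ∈ L)
    {s : ℝ} (hLu : ∀ w ∈ L, (cHess u w).PosDef ∧ jP (cHess u w) 1 ≤ s)
    (hLv : ∀ w ∈ L, (cHess v w).PosDef ∧ jP (cHess v w) 1 ≤ s) :
    jP (cHess (k ⋆[.lsmul ℝ ℝ, μ] fun w => max (u w) (v w)) z) 1 ≤ s := by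
  rw [jP_one_le_iff (hk.posDef_cHess_convolution_max hu huc hv hvc hL hkL
    (fun w hw => (hLu w hw).1) fun w hw => (hLv w hw).1)]
  intro P hP X
  have hlower {f : EuclideanSpace ℂ (Fin n) → ℝ}
      (hLf : ∀ w ∈ L, (cHess f w).PosDef ∧ jP (cHess f w) 1 ≤ s) (y) (hy : y ∈ Function.support k) :
      2 * (P * X).trace.re - s ≤ ∑ i, hermForm (cHess f (z - y)) ((P * X).col i) :=
    sub_le_comm.1 ((jP_one_le_iff (hLf _ (hkL y hy)).1).1 (hLf _ (hkL y hy)).2 P hP X)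
  exact sub_le_comm.1
    (hk.le_sum_hermForm_cHess_convolution_max hu huc hv hvc (hlower hLu) (hlower hLv))

end IsLipschitzMollifier

section Cutoff

variable {E : Type*} [NormedAddCommGroup E] [NormedSpace ℝ E] [FiniteDimensional ℝ E]

theorem exists_contDiff_hasCompactSupport_eventuallyEq {f : E → ℝ} {m : ℕ∞} {U L : Set E}
    (hU : IsOpen U) (hf : ContDiffOn ℝ m f U) (hL : IsCompact L) (hLU : L ⊆ U) :
    ∃ g : E → ℝ, ContDiff ℝ m g ∧ HasCompactSupport g ∧ g =ᶠ[𝓝ˢ L] f := by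
  obtain ⟨M, hM, hLM, hMU⟩ := exists_compact_between hL hU hLU
  obtain ⟨χ, hχ1, hχ0, -⟩ := exists_contMDiffMap_one_nhds_of_subset_interior (n := m)
    (modelWithCornersSelf ℝ E) hL.isClosed hLM
  refine ⟨fun z => χ z * f z, contDiff_iff_contDiffAt.2 fun z => ?_,
    .intro hM fun z hz => by rw [hχ0 z hz, zero_mul], ?_⟩
  · by_cases hz : z ∈ U
    · exact χ.contMDiff.contDiff.contDiffAt.mul (hf.contDiffAt (hU.mem_nhds hz))
    · refine (contDiffAt_const (c := 0)).congr_of_eventuallyEq ?_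
      filter_upwards [hM.isClosed.isOpen_compl.mem_nhds fun hzM => hz (hMU hzM)] with w hw
      rw [hχ0 w hw, zero_mul]
  · filter_upwards [hχ1] with z hz
    rw [hz, one_mul]

end Cutoff

section RadialKernel

variable {E : Type*} [NormedAddCommGroup E] [NormedSpace ℝ E] {ρ : ℝ → ℝ} {r : ℝ}

theorem eq_zero_of_le_of_forall_lt {a : ℝ} (hρ : ContinuousOn ρ (Set.Ici a))
    (hρa : ∀ t, a < t → ρ t = 0) : ∀ t, a ≤ t → ρ t = 0 := by
  have heq : Set.EqOn ρ 0 (Set.Ici a) :=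
    Set.EqOn.of_subset_closure (s := Set.Ioi a) hρa hρ continuousOn_const Set.Ioi_subset_Ici_self
      (closure_Ioi a).ge
  exact fun t ht => heq ht

theorem exists_lipschitzOnWith_Ici_of_contDiff (hρ : ContDiff ℝ 1 ρ)
    (hρ1 : ∀ t, 1 < t → ρ t = 0) : ∃ C, LipschitzOnWith C ρ (Set.Ici 0) := by
  obtain ⟨C, hC⟩ := (hρ.contDiffOn (s := Set.Icc 0 1)).exists_lipschitzOnWith one_ne_zero
    (convex_Icc 0 1) isCompact_Icc
  have hmin : Set.MapsTo (min · (1 : ℝ)) (Set.Ici 0) (Set.Icc 0 1) :=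
    fun t ht => ⟨le_min ht zero_le_one, min_le_right _ _⟩
  have hcomp : ρ ∘ (min · 1) = ρ := funext fun t => by
    rcases le_total t 1 with ht | ht
    · simp [ht]
    · simp [ht, eq_zero_of_le_of_forall_lt hρ.continuous.continuousOn hρ1]
  exact ⟨_, hcomp ▸ hC.comp (LipschitzWith.id.min_const 1).lipschitzOnWith hmin⟩

/-- The kernel `y ↦ r ^ (-dim E) ρ(‖y‖ / r)` with radial profile `ρ` at scale `r`. -/
noncomputable def radialKernel (ρ : ℝ → ℝ) (r : ℝ) (y : E) : ℝ :=
  (r ^ Module.finrank ℝ E)⁻¹ * ρ (‖y‖ / r)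

theorem radialKernel_eq_zero (hρ1 : ∀ t, 1 ≤ t → ρ t = 0) (hr : 0 < r) {y : E} (hy : r ≤ ‖y‖) :
    radialKernel ρ r y = 0 := by
  rw [radialKernel, hρ1 _ ((one_le_div hr).2 hy), mul_zero]

theorem norm_lt_of_mem_support_radialKernel (hρ1 : ∀ t, 1 ≤ t → ρ t = 0) (hr : 0 < r) {y : E}
    (hy : y ∈ Function.support (radialKernel ρ r)) : ‖y‖ < r :=
  not_le.1 fun h => hy (radialKernel_eq_zero hρ1 hr h)

theorem exists_lipschitzWith_radialKernel {C : NNReal} (hρ : LipschitzOnWith C ρ (Set.Ici 0))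
    (hr : 0 < r) : ∃ D, LipschitzWith D (radialKernel ρ r : E → ℝ) := by
  have hdiv : LipschitzWith (‖r⁻¹‖₊ * 1) fun y : E => r⁻¹ • ‖y‖ :=
    (lipschitzWith_smul r⁻¹).comp lipschitzWith_one_norm
  have hmaps : Set.MapsTo (fun y : E => r⁻¹ • ‖y‖) Set.univ (Set.Ici 0) :=
    fun y _ => smul_nonneg (inv_nonneg.2 hr.le) (norm_nonneg y)
  have hcomp := lipschitzOnWith_univ.1 (hρ.comp (hdiv.lipschitzOnWith (s := Set.univ)) hmaps)
  have hradial : ((r ^ Module.finrank ℝ E)⁻¹ • ·) ∘ ρ ∘ (fun y : E => r⁻¹ • ‖y‖) =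
      radialKernel ρ r := by
    simp [radialKernel, funext_iff, div_eq_inv_mul]
  exact ⟨_, hradial ▸ (lipschitzWith_smul _).comp hcomp⟩

variable [FiniteDimensional ℝ E] [MeasurableSpace E] [BorelSpace E] {μ : Measure E}
  [μ.IsAddHaarMeasure]

theorem integral_radialKernel (hr : 0 < r) :
    ∫ y : E, radialKernel ρ r y ∂μ = ∫ y : E, ρ ‖y‖ ∂μ := by
  have hscale := Measure.integral_comp_inv_smul_of_nonneg μ (fun y : E => ρ ‖y‖) hr.le
  simp only [norm_smul, norm_inv, Real.norm_of_nonneg hr.le, ← div_eq_inv_mul] at hscale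
  simp only [radialKernel, integral_const_mul, hscale, smul_eq_mul]
  exact inv_mul_cancel_left₀ (by positivity) _

theorem isLipschitzMollifier_radialKernel {C : NNReal} (hρ : LipschitzOnWith C ρ (Set.Ici 0))
    (hρ0 : ∀ t, 0 ≤ t → 0 ≤ ρ t) (hρ1 : ∀ t, 1 ≤ t → ρ t = 0)
    (hρint : ∫ y in ball (0 : E) 1, ρ ‖y‖ ∂μ = 1) (hr : 0 < r) :
    IsLipschitzMollifier (radialKernel ρ r) μ where
  lipschitz := exists_lipschitzWith_radialKernel hρ hr
  hasCompactSupport := .intro (isCompact_closedBall 0 r) fun y hy =>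
    radialKernel_eq_zero hρ1 hr (by simpa using (not_le.1 (mt mem_closedBall_zero_iff.2 hy)).le)
  nonneg y := mul_nonneg (by positivity) (hρ0 _ (by positivity))
  integral_eq_one := by
    rw [integral_radialKernel hr, ← hρint, setIntegral_eq_integral_of_forall_compl_eq_zero]
    exact fun y hy => hρ1 _ (by simpa using hy)

end RadialKernel

section Regularization

variable {n : ℕ} {ρ : ℝ → ℝ} {r : ℝ}

instance isAddHaarMeasure_leb (n : ℕ) : (leb n).IsAddHaarMeasure :=
  inferInstanceAs (Measure.addHaar : Measure (EuclideanSpace ℂ (Fin n))).IsAddHaarMeasure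

theorem reg_eq_convolution (hρ1 : ∀ t, 1 ≤ t → ρ t = 0) (hr : 0 < r)
    (f : EuclideanSpace ℂ (Fin n) → ℝ) :
    reg f ρ r = radialKernel ρ r ⋆[.lsmul ℝ ℝ, leb n] f := by
  have hdim : Module.finrank ℝ (EuclideanSpace ℂ (Fin n)) = 2 * n := by
    rw [← Module.finrank_mul_finrank ℝ ℂ, Complex.finrank_real_complex, finrank_euclideanSpace_fin]
  ext z
  rw [convolution_lsmul, reg, ← hdim]
  refine setIntegral_eq_integral_of_forall_compl_eq_zero fun y hy => ?_
  rw [← radialKernel, radialKernel_eq_zero hρ1 hr (by simpa using hy), zero_mul]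

theorem reg_eventuallyEq_convolution (hρ1 : ∀ t, 1 ≤ t → ρ t = 0) (hr : 0 < r) {R : ℝ}
    (hrR : r < R) {f g : EuclideanSpace ℂ (Fin n) → ℝ} {z : EuclideanSpace ℂ (Fin n)}
    (hfg : Set.EqOn f g (ball z R)) :
    reg f ρ r =ᶠ[𝓝 z] radialKernel ρ r ⋆[.lsmul ℝ ℝ, leb n] g := by
  filter_upwards [ball_mem_nhds z (sub_pos.2 hrR)] with w hw
  rw [reg_eq_convolution hρ1 hr, convolution_lsmul, convolution_lsmul]
  refine integral_congr_ae (.of_forall fun y => ?_)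
  by_cases hy : y ∈ Function.support (radialKernel ρ r)
  · have hyR : w - y ∈ ball z R := by
      rw [mem_ball_iff_norm] at hw ⊢
      rw [sub_right_comm]
      linarith [norm_sub_le (w - z) y, norm_lt_of_mem_support_radialKernel hρ1 hr hy]
    simp only [hfg hyR]
  · simp only [Function.notMem_support.1 hy, zero_smul]

end Regularization

section Subsolution

variable {n : ℕ}

theorem exists_contDiff_eqOn_jP_one_le {f : EuclideanSpace ℂ (Fin n) → ℝ}
    {U L : Set (EuclideanSpace ℂ (Fin n))} (hU : IsOpen U) (hf : ContDiffOn ℝ 2 f U)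
    (hL : IsCompact L) (hLU : L ⊆ U) {c : ℝ}
    (h : ∀ z ∈ U, (cHess f z).PosDef ∧ jP (cHess f z) 1 < c) :
    ∃ g, ContDiff ℝ 2 g ∧ HasCompactSupport g ∧ Set.EqOn f g L ∧
      ∃ s < c, ∀ z ∈ L, (cHess g z).PosDef ∧ jP (cHess g z) 1 ≤ s := by
  obtain ⟨g, hg, hgc, hgf⟩ :=
    exists_contDiff_hasCompactSupport_eventuallyEq (m := 2) hU hf hL hLU
  have hgL : ∀ z ∈ L, (cHess g z).PosDef ∧ jP (cHess g z) 1 < c := fun z hz => by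
    rw [cHess_congr (hgf.filter_mono (nhds_le_nhdsSet hz))]
    exact h z (hLU hz)
  obtain ⟨s, hsc, hs⟩ := exists_lt_forall_jP_one_le hL (continuous_cHess hg).continuousOn hgL
  exact ⟨g, hg, hgc, hgf.self_of_nhdsSet.symm, s, hsc, fun z hz => ⟨(hgL z hz).1, hs z hz⟩⟩

theorem max_psh_subsolution_general {U : Set (EuclideanSpace ℂ (Fin n))} (hU : IsOpen U)
    {u v : EuclideanSpace ℂ (Fin n) → ℝ} (hu : ContDiffOn ℝ 2 u U) (hv : ContDiffOn ℝ 2 v U)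
    {c : ℝ} (huc : ∀ z ∈ U, (cHess u z).PosDef ∧ jP (cHess u z) 1 < c)
    (hvc : ∀ z ∈ U, (cHess v z).PosDef ∧ jP (cHess v z) 1 < c)
    {ρ : ℝ → ℝ} {C : NNReal} (hρ : LipschitzOnWith C ρ (Set.Ici 0)) (hρ0 : ∀ t, 0 ≤ t → 0 ≤ ρ t)
    (hρsupp : ∀ t, 1 < t → ρ t = 0)
    (hρnorm : ∫ y in ball (0 : EuclideanSpace ℂ (Fin n)) 1, ρ ‖y‖ ∂(leb n) = 1)
    {K : Set (EuclideanSpace ℂ (Fin n))} (hK : IsCompact K) (hKU : K ⊆ U) :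
    ∃ ε > 0, ∃ r₀ > 0, ∀ r : ℝ, 0 < r → r < r₀ → ∀ z ∈ K,
      (cHess (reg (fun w => max (u w) (v w)) ρ r) z).PosDef ∧
        jP (cHess (reg (fun w => max (u w) (v w)) ρ r) z) 1 < c - ε := by
  obtain ⟨R, hR, hRU⟩ := hK.exists_cthickening_subset_open hU hKU
  have hL : IsCompact (cthickening R K) := hK.cthickening
  obtain ⟨u', hu', hu'c, hu_eq, s, hsc, hus⟩ :=
    exists_contDiff_eqOn_jP_one_le hU hu hL hRU huc
  obtain ⟨v', hv', hv'c, hv_eq, t, htc, hvt⟩ :=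
    exists_contDiff_eqOn_jP_one_le hU hv hL hRU hvc
  have hst : max s t < c := max_lt hsc htc
  refine ⟨(c - max s t) / 2, by linarith, R, hR, fun r hr hrR z hz => ?_⟩
  have hρ1 : ∀ t, 1 ≤ t → ρ t = 0 := eq_zero_of_le_of_forall_lt
    (hρ.continuousOn.mono (Set.Ici_subset_Ici.2 zero_le_one)) hρsupp
  have hzR : ball z R ⊆ cthickening R K :=
    (ball_subset_thickening hz R).trans (thickening_subset_cthickening R K)
  have hmem (y) (hy : y ∈ Function.support (radialKernel ρ r)) : z - y ∈ cthickening R K :=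
    hzR (by simpa using (norm_lt_of_mem_support_radialKernel hρ1 hr hy).trans hrR)
  have hmax : Set.EqOn (fun w => max (u w) (v w)) (fun w => max (u' w) (v' w)) (ball z R) :=
    fun w hw => congr_arg₂ max (hu_eq (hzR hw)) (hv_eq (hzR hw))
  rw [cHess_congr (reg_eventuallyEq_convolution hρ1 hr hrR hmax)]
  have hk := isLipschitzMollifier_radialKernel hρ hρ0 hρ1 hρnorm hr
  have hjP := hk.jP_cHess_convolution_max_le hu' hu'c hv' hv'c hL hmem
    (fun w hw => ⟨(hus w hw).1, (hus w hw).2.trans (le_max_left s t)⟩)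
    (fun w hw => ⟨(hvt w hw).1, (hvt w hw).2.trans (le_max_right s t)⟩)
  exact ⟨hk.posDef_cHess_convolution_max hu' hu'c hv' hv'c hL hmem (fun w hw => (hus w hw).1)
    fun w hw => (hvt w hw).1, by linarith⟩

end Subsolution

/-- Let `u, v` be smooth plurisubharmonic functions on `U ⊆ ℂ^n` whose complex Hessians
satisfy `P_{ω_E}(√-1∂∂̄u) < c` and `P_{ω_E}(√-1∂∂̄v) < c`.  Then the current
`T = √-1∂∂̄ max(u,v)` satisfies `n c T^{n-1} > (n-1) T^{n-2} ∧ ω_E` in the regularized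
sense: for every compact `K ⊆ U` there are `ε > 0` and `r₀ > 0` such that for all
`0 < r < r₀` the smooth regularization `T^{(r)} = √-1∂∂̄ (max(u,v))^{(r)}` is positive
definite on `K` with `P_{ω_E}(T^{(r)}) < c - ε`, i.e.
`n (c-ε) (T^{(r)})^{n-1} > (n-1) (T^{(r)})^{n-2} ∧ ω_E` on `K`. -/
theorem max_psh_subsolution {n : ℕ} (hn : 1 ≤ n)
    {U : Set (EuclideanSpace ℂ (Fin n))} (hU : IsOpen U)
    (u v : EuclideanSpace ℂ (Fin n) → ℝ)
    (hu : ContDiffOn ℝ (⊤ : ℕ∞) u U) (hv : ContDiffOn ℝ (⊤ : ℕ∞) v U)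
    (hupsh : PSHOn u U) (hvpsh : PSHOn v U)
    (c : ℝ) (hc : 0 < c)
    (huc : ∀ z ∈ U, (cHess u z).PosDef ∧ jP (cHess u z) 1 < c)
    (hvc : ∀ z ∈ U, (cHess v z).PosDef ∧ jP (cHess v z) 1 < c)
    (ρ : ℝ → ℝ) (hρsm : ContDiff ℝ (⊤ : ℕ∞) ρ) (hρ0 : ∀ t, 0 ≤ ρ t)
    (hρsupp : ∀ t, 1 < t → ρ t = 0)
    (hρnorm : ∫ y in ball (0 : EuclideanSpace ℂ (Fin n)) 1, ρ ‖y‖ ∂(leb n) = 1)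
    (K : Set (EuclideanSpace ℂ (Fin n))) (hK : IsCompact K) (hKU : K ⊆ U) :
    ∃ ε > 0, ∃ r₀ > 0, ∀ r : ℝ, 0 < r → r < r₀ → ∀ z ∈ K,
      (cHess (reg (fun w => max (u w) (v w)) ρ r) z).PosDef ∧
        jP (cHess (reg (fun w => max (u w) (v w)) ρ r) z) 1 < c - ε := by
  obtain ⟨C, hC⟩ := exists_lipschitzOnWith_Ici_of_contDiff (hρsm.of_le (by norm_cast)) hρsupp
  exact max_psh_subsolution_general hU (hu.of_le (by norm_cast)) (hv.of_le (by norm_cast)) huc hvc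
    hC (fun t _ => hρ0 t) hρsupp hρnorm hK hKU
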